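/- arXiv:1806.01441 — 2 statements merged into one kernel-verified Lean document; each statement's English description precedes it below -/
import Mathlib

section
/- (Existence and uniqueness for the nonlinear fractional Volterra integral equation) Let 0 < α ≤ 1, ψ increasing C¹ on I = [a,b], constants L > 0, M ≥ 0, δ > 1 with ξ = Lδ. Suppose f : I × ℝⁿ × ℝⁿ → ℝⁿ and k : I² × ℝⁿ → ℝⁿ are continuous and satisfy ‖f(t,u,v) − f(t,ū,v̄)‖ ≤ M(‖u−ū‖ + ‖v−v̄‖) and ‖k(t,s,u) − k(t,s,ū)‖ ≤ L‖u−ū‖, and that d₁ = sup_{t∈I} ‖f(t, 0, (1/Γ(α))∫_a^t ψ'(s)(ψ(t)−ψ(s))^{α−1} k(t,s,0) ds)‖ / E_α(ξ(ψ(t)−ψ(a))^α) < ∞. If M(1 + 1/δ) < 1, then the equation x(t) = f(t, x(t), (1/Γ(α)) ∫_a^t ψ'(s)(ψ(t)−ψ(s))^{α−1} k(t,s,x(s)) ds) has a unique continuous solution x : I → ℝⁿ. -/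
open MeasureTheory Set

/-- One-parameter Mittag-Leffler function `E_α(z) = ∑ z^k / Γ(αk+1)`. -/
noncomputable def ML (α z : ℝ) : ℝ := ∑' k : ℕ, z ^ k / Real.Gamma (α * k + 1)

/-- The Volterra-type integral operator
`(K x)(t) = (1/Γ(α)) ∫_a^t ψ'(s)(ψ(t)−ψ(s))^{α−1} k(t,s,x(s)) ds`. -/
noncomputable def volterraK {n : ℕ} (α : ℝ) (ψ : ℝ → ℝ) (a : ℝ)
    (k : ℝ → ℝ → EuclideanSpace ℝ (Fin n) → EuclideanSpace ℝ (Fin n))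
    (x : ℝ → EuclideanSpace ℝ (Fin n)) (t : ℝ) : EuclideanSpace ℝ (Fin n) :=
  (Real.Gamma α)⁻¹ • ∫ s in a..t, (deriv ψ s * (ψ t - ψ s) ^ (α - 1)) • k t s (x s)

/-- Continuous left inverse of a continuous strictly increasing function. -/
lemma aux_inverse {a b : ℝ} {ψ : ℝ → ℝ} (hab : a ≤ b) (hmono : StrictMonoOn ψ (Icc a b))
    (hc : ContinuousOn ψ (Icc a b)) :
    ∃ φ : ℝ → ℝ, Continuous φ ∧ (∀ v, φ v ∈ Icc a b) ∧ (∀ s ∈ Icc a b, φ (ψ s) = s) ∧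
      (∀ v ∈ Icc (ψ a) (ψ b), ψ (φ v) = v) := by
  have hcd : ψ a ≤ ψ b := hmono.monotoneOn (left_mem_Icc.2 hab) (right_mem_Icc.2 hab) hab
  have hmaps : ∀ s ∈ Icc a b, ψ s ∈ Icc (ψ a) (ψ b) := fun s hs =>
    ⟨hmono.monotoneOn (left_mem_Icc.2 hab) hs hs.1, hmono.monotoneOn hs (right_mem_Icc.2 hab) hs.2⟩
  let F : Icc a b → Icc (ψ a) (ψ b) := fun s => ⟨ψ s, hmaps s s.2⟩
  have hF : StrictMono F := fun s t hst => hmono s.2 t.2 hst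
  have hsurj : Function.Surjective F := by
    rintro ⟨v, hv⟩
    obtain ⟨s, hs, rfl⟩ := intermediate_value_Icc hab hc hv
    exact ⟨⟨s, hs⟩, rfl⟩
  let e := StrictMono.orderIsoOfSurjective F hF hsurj
  have he : ∀ s, e s = F s := fun s => rfl
  refine ⟨fun v => (e.symm (projIcc (ψ a) (ψ b) hcd v) : ℝ), ?_, ?_, ?_, ?_⟩
  · exact continuous_subtype_val.comp (e.symm.continuous.comp continuous_projIcc)
  · intro v; exact (e.symm _).2
  · intro s hs
    have : projIcc (ψ a) (ψ b) hcd (ψ s) = e ⟨s, hs⟩ := by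
      rw [projIcc_of_mem hcd (hmaps s hs)]; rfl
    simp only [this, OrderIso.symm_apply_apply]
  · intro v hv
    have h1 : e (e.symm (projIcc (ψ a) (ψ b) hcd v)) = projIcc (ψ a) (ψ b) hcd v :=
      e.apply_symm_apply _
    rw [projIcc_of_mem hcd hv] at h1
    have := congrArg Subtype.val h1
    simp only [projIcc_of_mem hcd hv]
    exact this

lemma aux_change {n : ℕ} {a b α : ℝ} {ψ φ : ℝ → ℝ}
    (hmono : StrictMonoOn ψ (Icc a b)) (hC1 : ContDiffOn ℝ 1 ψ (Icc a b))
    (hφ : ∀ s ∈ Icc a b, φ (ψ s) = s) (h : ℝ → EuclideanSpace ℝ (Fin n))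
    {t : ℝ} (ht : t ∈ Icc a b) :
    ∫ s in a..t, (deriv ψ s * (ψ t - ψ s) ^ (α - 1)) • h s =
      ∫ r in Ioo 0 (ψ t - ψ a), r ^ (α - 1) • h (φ (ψ t - r)) := by
  have hsub : Icc a t ⊆ Icc a b := Icc_subset_Icc_right ht.2
  have hat : a ∈ Icc a b := ⟨le_rfl, ht.1.trans ht.2⟩
  have hd : ∀ s ∈ Ioo a t, HasDerivAt ψ (deriv ψ s) s := by
    intro s hs
    have hn : Icc a b ∈ nhds s := Icc_mem_nhds hs.1 (hs.2.trans_le ht.2)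
    exact ((hC1.contDiffAt hn).differentiableAt (by norm_num)).hasDerivAt
  have hpos : ∀ s ∈ Ioo a t, 0 ≤ deriv ψ s := by
    intro s hs
    have hn : Icc a b ∈ nhds s := Icc_mem_nhds hs.1 (hs.2.trans_le ht.2)
    rw [← derivWithin_of_mem_nhds hn]
    exact hmono.monotoneOn.derivWithin_nonneg
  have himg : (fun s => ψ t - ψ s) '' Ioo a t = Ioo 0 (ψ t - ψ a) := by
    ext r
    constructor
    · rintro ⟨s, hs, rfl⟩
      have hs' : s ∈ Icc a b := hsub ⟨hs.1.le, hs.2.le⟩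
      exact ⟨sub_pos.2 (hmono hs' ht hs.2), sub_lt_sub_left (hmono hat hs' hs.1) _⟩
    · intro hr
      have hv : ψ t - r ∈ Ioo (ψ a) (ψ t) := ⟨by linarith [hr.2], by linarith [hr.1]⟩
      obtain ⟨s, hs, hs2⟩ := intermediate_value_Ioo ht.1 (hC1.continuousOn.mono hsub) hv
      exact ⟨s, hs, by simp only [hs2]; ring⟩
  rw [intervalIntegral.integral_of_le ht.1, integral_Ioc_eq_integral_Ioo, ← himg,
    integral_image_eq_integral_abs_deriv_smul measurableSet_Ioo (f' := fun s => - deriv ψ s)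
      (fun s hs => ((hd s hs).const_sub (ψ t)).hasDerivWithinAt)]
  · refine setIntegral_congr_fun measurableSet_Ioo fun s hs => ?_
    have hs' : s ∈ Icc a b := hsub ⟨hs.1.le, hs.2.le⟩
    simp only [abs_neg, abs_of_nonneg (hpos s hs), sub_sub_cancel, hφ s hs', mul_smul]
  · intro s hs s' hs' hss
    have h1 : ψ s = ψ s' := by simpa using hss
    exact hmono.injOn (hsub ⟨hs.1.le, hs.2.le⟩) (hsub ⟨hs'.1.le, hs'.2.le⟩) h1

lemma aux_rpow_int {α D : ℝ} (hα : 0 < α) : IntegrableOn (fun r : ℝ => r ^ (α - 1)) (Ioo 0 D) := by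
  rcases le_or_gt D 0 with h | h
  · simp [Ioo_eq_empty (not_lt.2 h)]
  · exact (intervalIntegral.integrableOn_Ioo_rpow_iff h).2 (by linarith)

lemma aux_intble {n : ℕ} {α D : ℝ} (hα : 0 < α) {g : ℝ → EuclideanSpace ℝ (Fin n)}
    (hg : Continuous g) : IntegrableOn (fun r : ℝ => r ^ (α - 1) • g r) (Ioo 0 D) := by
  obtain ⟨C, hC⟩ := (isCompact_Icc (a := (0:ℝ)) (b := D)).exists_bound_of_continuousOn
    hg.continuousOn
  refine Integrable.mono' ((aux_rpow_int hα).mul_const C) ?_ ?_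
  · exact (aux_rpow_int hα).aestronglyMeasurable.smul hg.aestronglyMeasurable
  · refine (ae_restrict_iff' measurableSet_Ioo).2 (Filter.Eventually.of_forall fun r hr => ?_)
    rw [norm_smul, Real.norm_of_nonneg (Real.rpow_nonneg hr.1.le _)]
    exact mul_le_mul_of_nonneg_left (hC r ⟨hr.1.le, hr.2.le⟩) (Real.rpow_nonneg hr.1.le _)

lemma aux_cont {n : ℕ} {a b α : ℝ} {ψ : ℝ → ℝ} (hα : 0 < α)
    (hmono : StrictMonoOn ψ (Icc a b)) (hc : ContinuousOn ψ (Icc a b))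
    {G : ℝ → ℝ → EuclideanSpace ℝ (Fin n)} (hG : Continuous fun p : ℝ × ℝ => G p.1 p.2) :
    ContinuousOn (fun t => ∫ r in Ioo 0 (ψ t - ψ a), r ^ (α - 1) • G t (ψ t - r)) (Icc a b) := by
  obtain ⟨C, hC⟩ := ((isCompact_Icc (a := a) (b := b)).prod
    (isCompact_Icc (a := ψ a) (b := ψ b))).exists_bound_of_continuousOn hG.continuousOn
  intro t₀ ht₀
  have hab : a ≤ b := ht₀.1.trans ht₀.2
  have hmt : ∀ t ∈ Icc a b, ψ t ≤ ψ b := fun t ht =>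
    hmono.monotoneOn ht (right_mem_Icc.2 hab) ht.2
  have heq : ∀ t, ∫ r in Ioo 0 (ψ t - ψ a), r ^ (α - 1) • G t (ψ t - r) =
      ∫ r, (Ioo 0 (ψ t - ψ a)).indicator (fun r => r ^ (α - 1) • G t (ψ t - r)) r := fun t =>
    (integral_indicator measurableSet_Ioo).symm
  simp only [heq]
  refine continuousWithinAt_of_dominated
    (bound := (Ioo 0 (ψ b - ψ a)).indicator fun r => r ^ (α - 1) * C) ?_ ?_ ?_ ?_
  · refine Filter.Eventually.of_forall fun t => ?_
    have hg : Continuous fun r => G t (ψ t - r) :=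
      hG.comp (continuous_const.prodMk (continuous_const.sub continuous_id))
    exact ((integrable_indicator_iff measurableSet_Ioo).2
      (aux_intble hα hg)).aestronglyMeasurable
  · filter_upwards [self_mem_nhdsWithin] with t ht
    refine Filter.Eventually.of_forall fun r => ?_
    by_cases hr : r ∈ Ioo 0 (ψ t - ψ a)
    · have hr' : r ∈ Ioo 0 (ψ b - ψ a) := ⟨hr.1, hr.2.trans_le (by linarith [hmt t ht])⟩
      rw [indicator_of_mem hr, indicator_of_mem hr', norm_smul,
        Real.norm_of_nonneg (Real.rpow_nonneg hr.1.le _)]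
      refine mul_le_mul_of_nonneg_left (hC (t, ψ t - r) ⟨ht, ?_, ?_⟩) (Real.rpow_nonneg hr.1.le _)
      · linarith [hr.2]
      · linarith [hr.1, hmt t ht]
    · rw [indicator_of_notMem hr, norm_zero]
      refine indicator_nonneg (fun r hr => mul_nonneg (Real.rpow_nonneg hr.1.le _) ?_) r
      exact (norm_nonneg _).trans (hC (a, ψ a) ⟨left_mem_Icc.2 hab, left_mem_Icc.2
        (hmt a (left_mem_Icc.2 hab))⟩)
  · exact (integrable_indicator_iff measurableSet_Ioo).2 ((aux_rpow_int hα).mul_const C)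
  · have hne : ∀ᵐ r : ℝ, r ≠ ψ t₀ - ψ a := by
      simp [ae_iff]
    filter_upwards [hne] with r hr
    have hψ : ContinuousWithinAt ψ (Icc a b) t₀ := hc t₀ ht₀
    have hψa : ContinuousWithinAt (fun t => ψ t - ψ a) (Icc a b) t₀ := hψ.sub_const _
    rcases lt_or_gt_of_ne hr with h | h
    · have hev : ∀ᶠ t in nhdsWithin t₀ (Icc a b), r < ψ t - ψ a := hψa.eventually (lt_mem_nhds h)
      have hcg : ContinuousWithinAt (fun t => (Ioi (0:ℝ)).indicator
          (fun r => r ^ (α - 1) • G t (ψ t - r)) r) (Icc a b) t₀ := by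
        by_cases h0 : r ∈ Ioi (0:ℝ)
        · simp only [indicator_of_mem h0]
          refine (continuousWithinAt_const (b := r ^ (α - 1))).smul
            (hG.continuousAt.comp_continuousWithinAt (f := fun t => (t, ψ t - r))
              (continuousWithinAt_id.prodMk (hψ.sub_const r)))
        · simp only [indicator_of_notMem h0]
          exact continuousWithinAt_const
      refine hcg.congr_of_eventuallyEq_of_mem ?_ ht₀
      filter_upwards [hev] with t ht
      by_cases h0 : 0 < r
      · rw [indicator_of_mem (show r ∈ Ioo 0 (ψ t - ψ a) from ⟨h0, ht⟩),
          indicator_of_mem (show r ∈ Ioi (0:ℝ) from h0)]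
      · rw [indicator_of_notMem (fun hh => h0 hh.1), indicator_of_notMem (show r ∉ Ioi (0:ℝ) from h0)]
    · have hev : ∀ᶠ t in nhdsWithin t₀ (Icc a b), ψ t - ψ a < r := hψa.eventually (gt_mem_nhds h)
      refine (continuousWithinAt_const (b := (0 : EuclideanSpace ℝ (Fin n)))).congr_of_eventuallyEq_of_mem ?_ ht₀
      filter_upwards [hev] with t ht
      exact indicator_of_notMem (fun hh => lt_asymm ht hh.2) _

/-- The weighted estimate. -/
lemma aux_est {n : ℕ} {α lam D A : ℝ} (hα : 0 < α) (hlam : 0 < lam) (hA : 0 ≤ A)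
    {g : ℝ → EuclideanSpace ℝ (Fin n)}
    (hb : ∀ r ∈ Ioo 0 D, ‖g r‖ ≤ A * Real.exp (lam * (D - r))) :
    ‖(Real.Gamma α)⁻¹ • ∫ r in Ioo 0 D, r ^ (α - 1) • g r‖ ≤
      A * (1 / lam) ^ α * Real.exp (lam * D) := by
  have hΓ : 0 < Real.Gamma α := Real.Gamma_pos_of_pos hα
  have hI := Real.integral_rpow_mul_exp_neg_mul_Ioi hα hlam
  have hpos : 0 < (1 / lam) ^ α * Real.Gamma α := by positivity
  have hint : IntegrableOn (fun r : ℝ => r ^ (α - 1) * Real.exp (-(lam * r))) (Ioi 0) := by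
    by_contra hcon
    rw [integral_undef hcon] at hI
    exact hpos.ne hI
  have hint2 : IntegrableOn (fun r : ℝ => A * Real.exp (lam * D) *
      (r ^ (α - 1) * Real.exp (-(lam * r)))) (Ioi 0) := hint.const_mul _
  have h1 : ‖∫ r in Ioo 0 D, r ^ (α - 1) • g r‖ ≤
      ∫ r in Ioo 0 D, A * Real.exp (lam * D) * (r ^ (α - 1) * Real.exp (-(lam * r))) := by
    refine norm_integral_le_of_norm_le (hint2.mono_set Ioo_subset_Ioi_self) ?_
    refine (ae_restrict_iff' measurableSet_Ioo).2 (Filter.Eventually.of_forall fun r hr => ?_)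
    rw [norm_smul, Real.norm_of_nonneg (Real.rpow_nonneg hr.1.le _)]
    refine (mul_le_mul_of_nonneg_left (hb r hr) (Real.rpow_nonneg hr.1.le _)).trans_eq ?_
    rw [show lam * (D - r) = lam * D + -(lam * r) by ring, Real.exp_add]
    ring
  have h2 : ∫ r in Ioo 0 D, A * Real.exp (lam * D) * (r ^ (α - 1) * Real.exp (-(lam * r))) ≤
      A * Real.exp (lam * D) * ((1 / lam) ^ α * Real.Gamma α) := by
    rw [← hI, ← integral_const_mul]
    refine setIntegral_mono_set hint2 ?_ Ioo_subset_Ioi_self.eventuallyLE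
    refine (ae_restrict_iff' measurableSet_Ioi).2 (Filter.Eventually.of_forall fun r hr => ?_)
    have : 0 ≤ r ^ (α - 1) := Real.rpow_nonneg (le_of_lt hr) _
    simp only [Pi.zero_apply]
    positivity
  rw [norm_smul, norm_inv, Real.norm_of_nonneg hΓ.le]
  calc _ ≤ (Real.Gamma α)⁻¹ * (A * Real.exp (lam * D) * ((1 / lam) ^ α * Real.Gamma α)) :=
        mul_le_mul_of_nonneg_left (h1.trans h2) (by positivity)
    _ = _ := by field_simp


theorem volterra_existence_uniqueness
    (n : ℕ) (a b α L M δ ξ : ℝ) (ψ : ℝ → ℝ)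
    (f : ℝ → EuclideanSpace ℝ (Fin n) → EuclideanSpace ℝ (Fin n) → EuclideanSpace ℝ (Fin n))
    (k : ℝ → ℝ → EuclideanSpace ℝ (Fin n) → EuclideanSpace ℝ (Fin n))
    (hα0 : 0 < α) (hα1 : α ≤ 1) (hab : a ≤ b)
    (hmono : StrictMonoOn ψ (Icc a b)) (hC1 : ContDiffOn ℝ 1 ψ (Icc a b))
    (hL : 0 < L) (hM : 0 ≤ M) (hδ : 1 < δ) (hξ : ξ = L * δ)
    (hf : Continuous fun p : ℝ × EuclideanSpace ℝ (Fin n) × EuclideanSpace ℝ (Fin n) =>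
      f p.1 p.2.1 p.2.2)
    (hk : Continuous fun p : ℝ × ℝ × EuclideanSpace ℝ (Fin n) => k p.1 p.2.1 p.2.2)
    (hfLip : ∀ t u v u' v', ‖f t u v - f t u' v'‖ ≤ M * (‖u - u'‖ + ‖v - v'‖))
    (hkLip : ∀ t s u u', ‖k t s u - k t s u'‖ ≤ L * ‖u - u'‖)
    (hd1 : BddAbove ((fun t =>
      ‖f t 0 (volterraK α ψ a k (fun _ => 0) t)‖ / ML α (ξ * (ψ t - ψ a) ^ α)) '' Icc a b))
    (hcontr : M * (1 + 1 / δ) < 1) :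
    ∃ x : ℝ → EuclideanSpace ℝ (Fin n),
      (ContinuousOn x (Icc a b) ∧
        ∀ t ∈ Icc a b, x t = f t (x t) (volterraK α ψ a k x t)) ∧
      ∀ y : ℝ → EuclideanSpace ℝ (Fin n),
        (ContinuousOn y (Icc a b) ∧
          ∀ t ∈ Icc a b, y t = f t (y t) (volterraK α ψ a k y t)) →
        ∀ t ∈ Icc a b, y t = x t := by
  have hψc : ContinuousOn ψ (Icc a b) := hC1.continuousOn
  obtain ⟨φ, hφc, hφm, hφl, hφr⟩ := aux_inverse hab hmono hψc
  have hδ0 : 0 < δ := by linarith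
  have hξ0 : 0 < ξ := by rw [hξ]; positivity
  obtain ⟨lam, hlam, hlamα⟩ : ∃ lam : ℝ, 0 < lam ∧ L * (1 / lam) ^ α = 1 / δ := by
    refine ⟨ξ ^ (1 / α), by positivity, ?_⟩
    rw [one_div (ξ ^ (1 / α)), Real.inv_rpow (by positivity), ← Real.rpow_mul hξ0.le,
      one_div_mul_cancel hα0.ne', Real.rpow_one, hξ]
    field_simp
  -- integral representation
  have hrep : ∀ (x : ℝ → EuclideanSpace ℝ (Fin n)), ∀ t ∈ Icc a b,
      volterraK α ψ a k x t = (Real.Gamma α)⁻¹ • ∫ r in Ioo 0 (ψ t - ψ a),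
        r ^ (α - 1) • k t (φ (ψ t - r)) (x (φ (ψ t - r))) := by
    intro x t ht
    unfold volterraK
    rw [aux_change hmono hC1 hφl (fun s => k t s (x s)) ht]
  have hKc : ∀ (x : ℝ → EuclideanSpace ℝ (Fin n)), Continuous x →
      ContinuousOn (volterraK α ψ a k x) (Icc a b) := by
    intro x hx
    have hG : Continuous fun p : ℝ × ℝ => k p.1 (φ p.2) (x (φ p.2)) :=
      hk.comp (continuous_fst.prodMk ((hφc.comp continuous_snd).prodMk
        (hx.comp (hφc.comp continuous_snd))))
    exact ((aux_cont hα0 hmono hψc (G := fun t v => k t (φ v) (x (φ v))) hG).const_smul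
      (Real.Gamma α)⁻¹).congr (hrep x)
  have hKest : ∀ (x y : ℝ → EuclideanSpace ℝ (Fin n)), Continuous x → Continuous y →
      ∀ A : ℝ, 0 ≤ A → (∀ s ∈ Icc a b, ‖x s - y s‖ ≤ A * Real.exp (lam * (ψ s - ψ a))) →
      ∀ t ∈ Icc a b, ‖volterraK α ψ a k x t - volterraK α ψ a k y t‖ ≤
        A * (1 / δ) * Real.exp (lam * (ψ t - ψ a)) := by
    intro x y hx hy A hA hxy t ht
    have hg : ∀ z : ℝ → EuclideanSpace ℝ (Fin n), Continuous z →
        Continuous fun r => k t (φ (ψ t - r)) (z (φ (ψ t - r))) := by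
      intro z hz
      have h1 : Continuous fun r => φ (ψ t - r) := hφc.comp (continuous_const.sub continuous_id)
      exact hk.comp (continuous_const.prodMk (h1.prodMk (hz.comp h1)))
    rw [hrep x t ht, hrep y t ht, ← smul_sub,
      ← integral_sub (aux_intble hα0 (hg x hx)) (aux_intble hα0 (hg y hy))]
    simp only [← smul_sub]
    refine (aux_est hα0 hlam (mul_nonneg hL.le hA) ?_).trans_eq ?_
    · intro r hr
      refine (hkLip _ _ _ _).trans ?_
      have hv : ψ t - r ∈ Icc (ψ a) (ψ b) :=
        ⟨by linarith [hr.2], by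
          linarith [hr.1, hmono.monotoneOn ht (right_mem_Icc.2 hab) ht.2]⟩
      have := hxy _ (hφm (ψ t - r))
      rw [hφr _ hv] at this
      rw [mul_assoc]
      refine mul_le_mul_of_nonneg_left (this.trans_eq ?_) hL.le
      rw [show ψ t - r - ψ a = ψ t - ψ a - r by ring]
    · rw [← hlamα]; ring
  -- the weight
  let w : Icc a b → ℝ := fun t => Real.exp (lam * (ψ t - ψ a))
  have hwpos : ∀ t, 0 < w t := fun t => Real.exp_pos _
  have hψr : Continuous fun t : Icc a b => ψ t := continuousOn_iff_continuous_domRestrict.1 hψc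
  have hwc : Continuous w := by
    exact Real.continuous_exp.comp (continuous_const.mul (hψr.sub continuous_const))
  let X : C(Icc a b, EuclideanSpace ℝ (Fin n)) → ℝ → EuclideanSpace ℝ (Fin n) :=
    fun z => IccExtend hab (fun t => w t • z t)
  have hXc : ∀ z, Continuous (X z) := fun z => (hwc.smul z.continuous).Icc_extend'
  have hX : ∀ z (t : Icc a b), X z t = w t • z t := fun z t => IccExtend_val hab _ t
  have hTc : ∀ z, Continuous fun t : Icc a b =>
      (w t)⁻¹ • f t (X z t) (volterraK α ψ a k (X z) t) := by
    intro z
    refine (hwc.inv₀ fun t => (hwpos t).ne').smul ?_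
    exact hf.comp (continuous_subtype_val.prodMk (((hXc z).comp continuous_subtype_val).prodMk
      (continuousOn_iff_continuous_domRestrict.1 (hKc (X z) (hXc z)))))
  let T : C(Icc a b, EuclideanSpace ℝ (Fin n)) → C(Icc a b, EuclideanSpace ℝ (Fin n)) :=
    fun z => ⟨_, hTc z⟩
  have hT : ∀ z (t : Icc a b),
      T z t = (w t)⁻¹ • f t (X z t) (volterraK α ψ a k (X z) t) := fun z t => rfl
  have hq0 : 0 ≤ M * (1 + 1 / δ) := by positivity
  have hcw : ContractingWith (NNReal.mk (M * (1 + 1 / δ)) hq0) T := by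
    refine ⟨by exact_mod_cast hcontr, LipschitzWith.of_dist_le_mul fun z z' => ?_⟩
    rw [NNReal.coe_mk]
    rw [ContinuousMap.dist_le (by positivity)]
    intro t
    have hx : ∀ s : Icc a b, ‖X z s - X z' s‖ ≤ dist z z' * w s := by
      intro s
      rw [hX, hX, ← smul_sub, norm_smul, Real.norm_of_nonneg (hwpos s).le, mul_comm,
        ← dist_eq_norm]
      exact mul_le_mul_of_nonneg_right (ContinuousMap.dist_apply_le_dist s) (hwpos s).le
    have hk2 := hKest (X z) (X z') (hXc z) (hXc z') (dist z z') dist_nonneg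
      (fun s hs => hx ⟨s, hs⟩) t t.2
    rw [hT, hT, dist_eq_norm, ← smul_sub, norm_smul, norm_inv, Real.norm_of_nonneg (hwpos t).le]
    have h3 := (hfLip t _ _ _ _).trans (mul_le_mul_of_nonneg_left (add_le_add (hx t) hk2) hM)
    refine (mul_le_mul_of_nonneg_left h3 (inv_nonneg.2 (hwpos t).le)).trans_eq ?_
    change (w t)⁻¹ * (M * (dist z z' * w t + dist z z' * (1 / δ) * w t)) = _
    have := (hwpos t).ne'
    field_simp
  have : Nonempty C(Icc a b, EuclideanSpace ℝ (Fin n)) := ⟨0⟩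
  let z₀ := ContractingWith.fixedPoint T hcw
  have hz₀ : T z₀ = z₀ := hcw.fixedPoint_isFixedPt
  refine ⟨X z₀, ⟨(hXc z₀).continuousOn, ?_⟩, ?_⟩
  · intro t ht
    have h1 : T z₀ ⟨t, ht⟩ = z₀ ⟨t, ht⟩ := by rw [hz₀]
    have h2 := hX z₀ ⟨t, ht⟩
    rw [← h1, hT, smul_inv_smul₀ (hwpos _).ne'] at h2
    exact h2
  · rintro y ⟨hyc, hy⟩ t ht
    have hyr : Continuous fun t : Icc a b => y t := continuousOn_iff_continuous_domRestrict.1 hyc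
    let z : C(Icc a b, EuclideanSpace ℝ (Fin n)) :=
      ⟨fun t => (w t)⁻¹ • y t, (hwc.inv₀ fun t => (hwpos t).ne').smul hyr⟩
    have hXz : ∀ s ∈ Icc a b, X z s = y s := by
      intro s hs
      have := hX z ⟨s, hs⟩
      refine this.trans ?_
      exact smul_inv_smul₀ (hwpos _).ne' _
    have hKz : ∀ s ∈ Icc a b, volterraK α ψ a k (X z) s = volterraK α ψ a k y s := by
      intro s hs
      rw [hrep _ s hs, hrep _ s hs]
      simp only [hXz _ (hφm _)]
    have hzfix : T z = z := by
      ext1 s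
      rw [hT, hXz s s.2, hKz s s.2, ← hy s s.2]
      rfl
    have hzz : z = z₀ := hcw.fixedPoint_unique hzfix
    rw [← hXz t ht, hzz]
end

section
/- (Norm bound for the Volterra operator) Under the assumptions: 0 < α ≤ 1, ψ increasing C¹ on I = [a,b], L > 0, M ≥ 0, δ > 1, ξ = Lδ, f and k continuous with ‖f(t,u,v)−f(t,ū,v̄)‖ ≤ M(‖u−ū‖+‖v−v̄‖), ‖k(t,s,u)−k(t,s,ū)‖ ≤ L‖u−ū‖, and d₁ = ‖t ↦ f(t,0,(1/Γ(α))∫_a^t ψ'(s)(ψ(t)−ψ(s))^{α−1}k(t,s,0)ds)‖_{ξ,∞} < ∞; define (Tx)(t) = f(t, x(t), (1/Γ(α))∫_a^t ψ'(s)(ψ(t)−ψ(s))^{α−1}k(t,s,x(s))ds). Then for every continuous x : I → ℝⁿ, ‖Tx‖_{ξ,∞} ≤ d₁ + M(1 + 1/δ)‖x‖_{ξ,∞}; in particular T maps C_ξ(I,ℝⁿ) into itself. -/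
open MeasureTheory Set

/-- The weighted sup-norm `‖·‖_{ξ,∞}` of a function on `[a,b]`. -/
noncomputable def nXi {n : ℕ} (a b ξ α : ℝ) (ψ : ℝ → ℝ)
    (x : ℝ → EuclideanSpace ℝ (Fin n)) : ℝ :=
  ⨆ t : Icc a b, ‖x t.1‖ / ML α (ξ * (ψ t.1 - ψ a) ^ α)


lemma vb_gamma_lower {s r : ℝ} (hs : 0 ≤ s) (hr : 0 < r) :
    Real.exp (-r) * r ^ s ≤ Real.Gamma (s + 1) := by
  rw [Real.Gamma_eq_integral (by linarith)]
  have h1 : IntegrableOn (fun x : ℝ => Real.exp (-x) * x ^ (s + 1 - 1)) (Ioi 0) :=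
    Real.GammaIntegral_convergent (by linarith)
  have hsub : Ioi r ⊆ Ioi (0:ℝ) := Ioi_subset_Ioi hr.le
  calc Real.exp (-r) * r ^ s = ∫ x in Ioi r, Real.exp (-x) * r ^ s := by
        rw [integral_mul_const, integral_exp_neg_Ioi]
    _ ≤ ∫ x in Ioi r, Real.exp (-x) * x ^ (s + 1 - 1) := by
        apply setIntegral_mono_on
        · exact (integrableOn_exp_neg_Ioi r).mul_const _
        · exact h1.mono_set hsub
        · exact measurableSet_Ioi
        · intro x hx
          have hx' : r < x := hx
          rw [add_sub_cancel_right]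
          gcongr
    _ ≤ _ := by
        apply setIntegral_mono_set h1
        · filter_upwards [ae_restrict_mem measurableSet_Ioi] with x hx
          have hx' : (0:ℝ) < x := hx
          simp only [Pi.zero_apply]; positivity
        · exact hsub.eventuallyLE

lemma vb_gamma_pos {α : ℝ} (hα : 0 < α) (k : ℕ) : 0 < Real.Gamma (α * k + 1) :=
  Real.Gamma_pos_of_pos (by positivity)

lemma vb_summable {α z : ℝ} (hα : 0 < α) (hz : 0 ≤ z) :
    Summable fun k : ℕ => z ^ k / Real.Gamma (α * k + 1) := by
  set r : ℝ := (2 * z + 1) ^ (1 / α) with hr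
  have hr0 : 0 < r := by positivity
  have hrα : r ^ α = 2 * z + 1 := by
    rw [hr, ← Real.rpow_mul (by positivity), one_div, inv_mul_cancel₀ hα.ne', Real.rpow_one]
  have hq : z / (2 * z + 1) < 1 := by rw [div_lt_one (by positivity)]; linarith
  refine Summable.of_nonneg_of_le (fun k => ?_) (fun k => ?_)
    ((summable_geometric_of_lt_one (by positivity) hq).mul_left (Real.exp r))
  · have := vb_gamma_pos hα k
    positivity
  · have h := vb_gamma_lower (s := α * k) (by positivity) hr0
    rw [Real.rpow_mul hr0.le, hrα, Real.rpow_natCast] at h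
    calc z ^ k / Real.Gamma (α * k + 1) ≤ z ^ k / (Real.exp (-r) * (2 * z + 1) ^ k) := by
          gcongr
      _ = _ := by rw [Real.exp_neg, div_pow]; field_simp

lemma vb_one_le_ML {α z : ℝ} (hα : 0 < α) (hz : 0 ≤ z) : 1 ≤ ML α z := by
  have h := (vb_summable hα hz).le_tsum 0 (fun k _ => by
    have := vb_gamma_pos hα k
    positivity)
  simpa [ML] using h

lemma vb_beta {α β T : ℝ} (hα : 0 < α) (hβ : 0 ≤ β) (hT : 0 < T) :
    ∫ τ in Ioo 0 T, (T - τ) ^ (α - 1) * τ ^ β =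
      T ^ (α + β) * (Real.Gamma α * Real.Gamma (β + 1) / Real.Gamma (α + β + 1)) := by
  have h := Complex.betaIntegral_scaled ((β + 1 : ℝ) : ℂ) (α : ℂ) hT
  rw [Complex.betaIntegral_eq_Gamma_mul_div _ _ (by simp; linarith) (by simpa),
    intervalIntegral.integral_of_le hT.le, integral_Ioc_eq_integral_Ioo] at h
  have h2 : ∫ x in Ioo 0 T, ((x : ℂ) ^ (((β + 1 : ℝ) : ℂ) - 1) * ((T : ℂ) - x) ^ ((α : ℂ) - 1))
      = ∫ τ in Ioo 0 T, (((T - τ) ^ (α - 1) * τ ^ β : ℝ) : ℂ) := by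
    apply setIntegral_congr_fun measurableSet_Ioo
    intro x hx
    simp only
    rw [mul_comm, Complex.ofReal_mul, Complex.ofReal_cpow (by linarith [hx.2]),
      Complex.ofReal_cpow hx.1.le]
    push_cast
    simp
  rw [h2, integral_complex_ofReal] at h
  have h3 : (T : ℂ) ^ (((β + 1 : ℝ) : ℂ) + (α : ℂ) - 1) = ((T ^ (α + β) : ℝ) : ℂ) := by
    rw [Complex.ofReal_cpow hT.le]
    congr 1
    push_cast
    ring
  rw [h3, ← Complex.ofReal_add, Complex.Gamma_ofReal, Complex.Gamma_ofReal,
    Complex.Gamma_ofReal] at h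
  have h4 := h
  norm_cast at h4
  rw [h4, show β + 1 + α = α + β + 1 by ring]
  ring

lemma vb_beta_pos {α β T : ℝ} (hα : 0 < α) (hβ : 0 ≤ β) (hT : 0 < T) :
    0 < ∫ τ in Ioo 0 T, (T - τ) ^ (α - 1) * τ ^ β := by
  rw [vb_beta hα hβ hT]
  have := Real.Gamma_pos_of_pos hα
  have := Real.Gamma_pos_of_pos (show 0 < β + 1 by linarith)
  have := Real.Gamma_pos_of_pos (show 0 < α + β + 1 by linarith)
  positivity

lemma vb_beta_int {α β T : ℝ} (hα : 0 < α) (hβ : 0 ≤ β) (hT : 0 < T) :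
    IntegrableOn (fun τ => (T - τ) ^ (α - 1) * τ ^ β) (Ioo 0 T) :=
  .of_integral_ne_zero (vb_beta_pos hα hβ hT).ne'

lemma vb_ML_int {α ξ T : ℝ} (hα : 0 < α) (hξ : 0 < ξ) (hT : 0 < T) :
    ∫ τ in Ioo 0 T, (T - τ) ^ (α - 1) * ML α (ξ * τ ^ α) =
      Real.Gamma α / ξ * (ML α (ξ * T ^ α) - 1) := by
  have hΓ := Real.Gamma_pos_of_pos hα
  set F : ℕ → ℝ → ℝ := fun k τ =>
    ξ ^ k / Real.Gamma (α * k + 1) * ((T - τ) ^ (α - 1) * τ ^ (α * k)) with hF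
  have hFi : ∀ k, IntegrableOn (F k) (Ioo 0 T) := fun k =>
    (vb_beta_int hα (by positivity) hT).const_mul _
  have hFv : ∀ k, ∫ τ in Ioo 0 T, F k τ =
      Real.Gamma α / ξ * ((ξ * T ^ α) ^ (k + 1) / Real.Gamma (α * ((k + 1 : ℕ) : ℝ) + 1)) := by
    intro k
    simp only [hF]
    have h1 := vb_gamma_pos hα k
    have h2 := vb_gamma_pos hα (k + 1)
    have e : α + α * k = α * ((k + 1 : ℕ) : ℝ) := by push_cast; ring
    rw [integral_const_mul, vb_beta hα (by positivity) hT, e, Real.rpow_mul hT.le,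
      Real.rpow_natCast]
    field_simp
    ring
  have hFn : ∀ k, ∫ τ in Ioo 0 T, ‖F k τ‖ = ∫ τ in Ioo 0 T, F k τ := by
    intro k
    apply setIntegral_congr_fun measurableSet_Ioo
    intro τ hτ
    have h1 := vb_gamma_pos hα k
    have h2 : 0 ≤ T - τ := by linarith [hτ.2]
    have h3 := hτ.1
    simp only [Real.norm_eq_abs]
    apply abs_of_nonneg
    simp only [hF]
    positivity
  have hS := vb_summable (z := ξ * T ^ α) hα (by positivity)
  have hS1 := (summable_nat_add_iff 1).2 hS
  have hsum : HasSum (fun k => ∫ τ in Ioo 0 T, F k τ) (∫ τ in Ioo 0 T, ∑' k, F k τ) := by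
    apply hasSum_integral_of_summable_integral_norm hFi
    simp_rw [hFn, hFv]
    exact hS1.mul_left _
  have heq : ∫ τ in Ioo 0 T, (T - τ) ^ (α - 1) * ML α (ξ * τ ^ α) =
      ∫ τ in Ioo 0 T, ∑' k, F k τ := by
    apply setIntegral_congr_fun measurableSet_Ioo
    intro τ hτ
    simp only [ML, hF]
    rw [← tsum_mul_left]
    congr 1
    ext k
    rw [mul_pow, ← Real.rpow_natCast (τ ^ α), ← Real.rpow_mul hτ.1.le]
    ring
  rw [heq, ← hsum.tsum_eq]
  simp_rw [hFv]
  rw [tsum_mul_left, ML, hS.tsum_eq_zero_add]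
  simp

lemma vb_ML_intOn {α ξ T : ℝ} (hα : 0 < α) (hξ : 0 < ξ) (hT : 0 < T) :
    IntegrableOn (fun τ => (T - τ) ^ (α - 1) * ML α (ξ * τ ^ α)) (Ioo 0 T) := by
  apply Integrable.of_integral_ne_zero
  rw [vb_ML_int hα hξ hT]
  have hΓ := Real.Gamma_pos_of_pos hα
  have hz : 0 < ξ * T ^ α := by positivity
  have hS := vb_summable hα hz.le
  have h := hS.sum_le_tsum (Finset.range 2) (fun k _ => by
    have := vb_gamma_pos hα k
    positivity)
  have hp := vb_gamma_pos hα 1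
  have h1 : 0 < (ξ * T ^ α) / Real.Gamma (α * (1 : ℕ) + 1) := by positivity
  have h2 : 1 + (ξ * T ^ α) / Real.Gamma (α * (1 : ℕ) + 1) ≤ ML α (ξ * T ^ α) := by
    simpa [ML, Finset.sum_range_succ] using h
  have h3 : 0 < ML α (ξ * T ^ α) - 1 := by linarith
  positivity

lemma vb_subst {a b α t : ℝ} {ψ : ℝ → ℝ}
    (hmono : StrictMonoOn ψ (Icc a b)) (hC1 : ContDiffOn ℝ 1 ψ (Icc a b))
    (hat : a < t) (htb : t ≤ b) (G : ℝ → ℝ) :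
    (IntegrableOn (fun τ => (ψ t - ψ a - τ) ^ (α - 1) * G τ) (Ioo 0 (ψ t - ψ a)) →
      IntegrableOn (fun s => deriv ψ s * (ψ t - ψ s) ^ (α - 1) * G (ψ s - ψ a)) (Ioo a t)) ∧
    ∫ s in Ioo a t, deriv ψ s * (ψ t - ψ s) ^ (α - 1) * G (ψ s - ψ a) =
      ∫ τ in Ioo 0 (ψ t - ψ a), (ψ t - ψ a - τ) ^ (α - 1) * G τ := by
  have hsub : Icc a t ⊆ Icc a b := Icc_subset_Icc_right htb
  have hm := hmono.mono hsub
  have hcont : ContinuousOn (fun s => ψ s - ψ a) (Icc a t) :=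
    (hC1.continuousOn.mono hsub).sub continuousOn_const
  have himg : (fun s => ψ s - ψ a) '' Ioo a t = Ioo 0 (ψ t - ψ a) := by
    apply Subset.antisymm
    · rintro _ ⟨s, hs, rfl⟩
      have h1 := hm (left_mem_Icc.2 hat.le) (Ioo_subset_Icc_self hs) hs.1
      have h2 := hm (Ioo_subset_Icc_self hs) (right_mem_Icc.2 hat.le) hs.2
      exact ⟨by simpa using h1, by simpa using h2⟩
    · have := intermediate_value_Ioo hat.le hcont
      simpa using this
  have hd : ∀ s ∈ Ioo a t, HasDerivWithinAt (fun s => ψ s - ψ a) (deriv ψ s) (Ioo a t) s := by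
    intro s hs
    have hn : Icc a b ∈ nhds s := Icc_mem_nhds hs.1 (hs.2.trans_le htb)
    have h1 : DifferentiableAt ℝ ψ s := (hC1.contDiffAt hn).differentiableAt (by simp)
    exact (h1.hasDerivAt.sub_const _).hasDerivWithinAt
  have hinj : InjOn (fun s => ψ s - ψ a) (Ioo a t) := by
    intro s hs s' hs' h
    exact hm.injOn (Ioo_subset_Icc_self hs) (Ioo_subset_Icc_self hs') (by simpa using h)
  have hpos : ∀ s ∈ Ioo a t, 0 ≤ deriv ψ s := by
    intro s hs
    have hn : Icc a b ∈ nhds s := Icc_mem_nhds hs.1 (hs.2.trans_le htb)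
    rw [← derivWithin_of_mem_nhds hn]
    exact hmono.monotoneOn.derivWithin_nonneg
  have hcongr : EqOn (fun s => |deriv ψ s| • ((ψ t - ψ a - (ψ s - ψ a)) ^ (α - 1) * G (ψ s - ψ a)))
      (fun s => deriv ψ s * (ψ t - ψ s) ^ (α - 1) * G (ψ s - ψ a)) (Ioo a t) := by
    intro s hs
    simp only [smul_eq_mul]
    rw [abs_of_nonneg (hpos s hs), show ψ t - ψ a - (ψ s - ψ a) = ψ t - ψ s by ring]
    ring
  constructor
  · intro h
    rw [← himg, integrableOn_image_iff_integrableOn_abs_deriv_smul measurableSet_Ioo hd hinj] at h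
    exact h.congr_fun hcongr measurableSet_Ioo
  · rw [← himg, integral_image_eq_integral_abs_deriv_smul measurableSet_Ioo hd hinj]
    exact (setIntegral_congr_fun measurableSet_Ioo hcongr).symm

lemma vb_kernel {n : ℕ} {a b α L ξ N t : ℝ} {ψ : ℝ → ℝ}
    {k : ℝ → ℝ → EuclideanSpace ℝ (Fin n) → EuclideanSpace ℝ (Fin n)}
    (hα0 : 0 < α)
    (hmono : StrictMonoOn ψ (Icc a b)) (hC1 : ContDiffOn ℝ 1 ψ (Icc a b))
    (hL : 0 < L) (hξ : 0 < ξ) (hN : 0 ≤ N)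
    (hk : Continuous fun p : ℝ × ℝ × EuclideanSpace ℝ (Fin n) => k p.1 p.2.1 p.2.2)
    (hkLip : ∀ t s u u', ‖k t s u - k t s u'‖ ≤ L * ‖u - u'‖)
    {x : ℝ → EuclideanSpace ℝ (Fin n)} (hx : ContinuousOn x (Icc a b))
    (hxN : ∀ s ∈ Icc a b, ‖x s‖ ≤ N * ML α (ξ * (ψ s - ψ a) ^ α)) (ht : t ∈ Icc a b) :
    ‖volterraK α ψ a k x t - volterraK α ψ a k (fun _ => 0) t‖ ≤
      L / ξ * N * ML α (ξ * (ψ t - ψ a) ^ α) := by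
  have hΓ := Real.Gamma_pos_of_pos hα0
  have hsub : Icc a t ⊆ Icc a b := Icc_subset_Icc_right ht.2
  have hT0 : 0 ≤ ψ t - ψ a :=
    sub_nonneg.2 (hmono.monotoneOn (left_mem_Icc.2 (ht.1.trans ht.2)) ht ht.1)
  have hE := vb_one_le_ML (z := ξ * (ψ t - ψ a) ^ α) hα0 (by positivity)
  rcases ht.1.eq_or_lt with rfl | hat
  · simp only [volterraK, intervalIntegral.integral_same, smul_zero, sub_self, norm_zero] at hE ⊢
    positivity
  have hT : 0 < ψ t - ψ a :=
    sub_pos.2 (hmono (left_mem_Icc.2 (ht.1.trans ht.2)) ht hat)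
  obtain ⟨hi1, -⟩ := vb_subst (α := α) hmono hC1 hat ht.2 (fun τ => τ ^ (0:ℝ))
  obtain ⟨hi2, he2⟩ := vb_subst (α := α) hmono hC1 hat ht.2 (fun τ => ML α (ξ * τ ^ α))
  have hw : IntegrableOn (fun s => deriv ψ s * (ψ t - ψ s) ^ (α - 1)) (Ioo a t) := by
    simpa using hi1 (vb_beta_int hα0 le_rfl hT)
  have hwE := hi2 (vb_ML_intOn hα0 hξ hT)
  rw [vb_ML_int hα0 hξ hT] at he2
  have hki : ∀ y : ℝ → EuclideanSpace ℝ (Fin n), ContinuousOn y (Icc a t) →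
      IntegrableOn (fun s => (deriv ψ s * (ψ t - ψ s) ^ (α - 1)) • k t s (y s)) (Ioo a t) := by
    intro y hy
    refine hw.smul_continuousOn_of_subset (K := Icc a t) ?_ measurableSet_Ioo isCompact_Icc
      Ioo_subset_Icc_self
    exact hk.comp_continuousOn (continuousOn_const.prodMk (continuousOn_id.prodMk hy))
  have hk1 := hki x (hx.mono hsub)
  have hk2 := hki (fun _ => 0) continuousOn_const
  have hpos : ∀ s ∈ Ioo a t, 0 ≤ deriv ψ s := by
    intro s hs
    have hn : Icc a b ∈ nhds s := Icc_mem_nhds hs.1 (hs.2.trans_le ht.2)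
    rw [← derivWithin_of_mem_nhds hn]
    exact hmono.monotoneOn.derivWithin_nonneg
  simp only [volterraK]
  rw [← smul_sub, intervalIntegral.integral_of_le hat.le, intervalIntegral.integral_of_le hat.le,
    integral_Ioc_eq_integral_Ioo, integral_Ioc_eq_integral_Ioo, ← integral_sub hk1 hk2, norm_smul,
    Real.norm_of_nonneg (by positivity)]
  have hb : ‖∫ s in Ioo a t, ((deriv ψ s * (ψ t - ψ s) ^ (α - 1)) • k t s (x s) -
      (deriv ψ s * (ψ t - ψ s) ^ (α - 1)) • k t s 0)‖ ≤
      ∫ s in Ioo a t, (L * N) *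
        (deriv ψ s * (ψ t - ψ s) ^ (α - 1) * ML α (ξ * (ψ s - ψ a) ^ α)) := by
    apply norm_integral_le_of_norm_le (hwE.const_mul (L * N))
    filter_upwards [ae_restrict_mem measurableSet_Ioo] with s hs
    have hsb : s ∈ Icc a b := hsub (Ioo_subset_Icc_self hs)
    have h1 : 0 ≤ ψ t - ψ s := sub_nonneg.2 (hmono.monotoneOn hsb ht hs.2.le)
    have hw0 : 0 ≤ deriv ψ s * (ψ t - ψ s) ^ (α - 1) :=
      mul_nonneg (hpos s hs) (Real.rpow_nonneg h1 _)
    rw [← smul_sub, norm_smul, Real.norm_of_nonneg hw0]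
    have h2 := hkLip t s (x s) 0
    rw [sub_zero] at h2
    calc _ ≤ deriv ψ s * (ψ t - ψ s) ^ (α - 1) * (L * (N * ML α (ξ * (ψ s - ψ a) ^ α))) := by
          gcongr
          exact h2.trans (by gcongr; exact hxN s hsb)
      _ = _ := by ring
  rw [integral_const_mul, he2] at hb
  calc _ ≤ (Real.Gamma α)⁻¹ * (L * N * (Real.Gamma α / ξ * (ML α (ξ * (ψ t - ψ a) ^ α) - 1))) := by
        gcongr
    _ = L / ξ * N * (ML α (ξ * (ψ t - ψ a) ^ α) - 1) := by field_simp
    _ ≤ _ := by gcongr; linarith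

theorem volterra_operator_norm_bound
    (n : ℕ) (a b α L M δ ξ : ℝ) (ψ : ℝ → ℝ)
    (f : ℝ → EuclideanSpace ℝ (Fin n) → EuclideanSpace ℝ (Fin n) → EuclideanSpace ℝ (Fin n))
    (k : ℝ → ℝ → EuclideanSpace ℝ (Fin n) → EuclideanSpace ℝ (Fin n))
    (hα0 : 0 < α) (hα1 : α ≤ 1) (hab : a ≤ b)
    (hmono : StrictMonoOn ψ (Icc a b)) (hC1 : ContDiffOn ℝ 1 ψ (Icc a b))
    (hL : 0 < L) (hM : 0 ≤ M) (hδ : 1 < δ) (hξ : ξ = L * δ)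
    (hf : Continuous fun p : ℝ × EuclideanSpace ℝ (Fin n) × EuclideanSpace ℝ (Fin n) =>
      f p.1 p.2.1 p.2.2)
    (hk : Continuous fun p : ℝ × ℝ × EuclideanSpace ℝ (Fin n) => k p.1 p.2.1 p.2.2)
    (hfLip : ∀ t u v u' v', ‖f t u v - f t u' v'‖ ≤ M * (‖u - u'‖ + ‖v - v'‖))
    (hkLip : ∀ t s u u', ‖k t s u - k t s u'‖ ≤ L * ‖u - u'‖)
    (hd1 : BddAbove ((fun t =>
      ‖f t 0 (volterraK α ψ a k (fun _ => 0) t)‖ / ML α (ξ * (ψ t - ψ a) ^ α)) '' Icc a b))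
    (x : ℝ → EuclideanSpace ℝ (Fin n)) (hx : ContinuousOn x (Icc a b)) :
    nXi a b ξ α ψ (fun t => f t (x t) (volterraK α ψ a k x t))
      ≤ nXi a b ξ α ψ (fun t => f t 0 (volterraK α ψ a k (fun _ => 0) t))
        + M * (1 + 1 / δ) * nXi a b ξ α ψ x := by
  have hξ0 : 0 < ξ := by rw [hξ]; positivity
  have hT0 : ∀ t ∈ Icc a b, 0 ≤ ψ t - ψ a := fun t ht =>
    sub_nonneg.2 (hmono.monotoneOn (left_mem_Icc.2 hab) ht ht.1)
  have hE : ∀ t ∈ Icc a b, 1 ≤ ML α (ξ * (ψ t - ψ a) ^ α) := fun t ht => by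
    have := hT0 t ht
    exact vb_one_le_ML hα0 (by positivity)
  have hne : Nonempty (Icc a b) := ⟨⟨a, left_mem_Icc.2 hab⟩⟩
  obtain ⟨C, hC⟩ := isCompact_Icc.exists_bound_of_continuousOn hx
  have hbx : BddAbove (range fun t : Icc a b => ‖x t.1‖ / ML α (ξ * (ψ t.1 - ψ a) ^ α)) := by
    refine ⟨C, ?_⟩
    rintro _ ⟨t, rfl⟩
    exact (div_le_self (norm_nonneg _) (hE t.1 t.2)).trans (hC t.1 t.2)
  have hbd : BddAbove (range fun t : Icc a b =>
      ‖f t.1 0 (volterraK α ψ a k (fun _ => 0) t.1)‖ / ML α (ξ * (ψ t.1 - ψ a) ^ α)) := by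
    rwa [image_eq_range] at hd1
  have hN : 0 ≤ nXi a b ξ α ψ x := Real.iSup_nonneg fun t => by
    have := hE t.1 t.2
    positivity
  have hxN : ∀ s ∈ Icc a b, ‖x s‖ ≤ nXi a b ξ α ψ x * ML α (ξ * (ψ s - ψ a) ^ α) := by
    intro s hs
    have := hE s hs
    rw [← div_le_iff₀ (by linarith)]
    exact le_ciSup hbx ⟨s, hs⟩
  refine ciSup_le fun t => ?_
  obtain ⟨t, ht⟩ := t
  have hEt := hE t ht
  have hd : ‖f t 0 (volterraK α ψ a k (fun _ => 0) t)‖ ≤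
      nXi a b ξ α ψ (fun t => f t 0 (volterraK α ψ a k (fun _ => 0) t)) *
        ML α (ξ * (ψ t - ψ a) ^ α) := by
    rw [← div_le_iff₀ (by linarith)]
    exact le_ciSup hbd ⟨t, ht⟩
  have hK := vb_kernel hα0 hmono hC1 hL hξ0 hN hk hkLip hx hxN ht
  have hLξ : L / ξ = 1 / δ := by rw [hξ]; field_simp
  rw [hLξ] at hK
  have hF := hfLip t (x t) (volterraK α ψ a k x t) 0 (volterraK α ψ a k (fun _ => 0) t)
  rw [sub_zero] at hF
  have hxt := hxN t ht
  simp only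
  rw [div_le_iff₀ (by linarith)]
  have htri := norm_le_norm_add_norm_sub' (f t (x t) (volterraK α ψ a k x t))
    (f t 0 (volterraK α ψ a k (fun _ => 0) t))
  have hM2 := mul_le_mul_of_nonneg_left (add_le_add hxt hK) hM
  calc _ ≤ _ := htri
    _ ≤ _ := add_le_add hd (hF.trans hM2)
    _ = _ := by ring
end
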